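/- arXiv:0807.1016 — 5 statements merged into one kernel-verified Lean document; each statement's English description precedes it below -/
import Mathlib

section
/- Let X, Y, Z be sets, let f be a relation between the disjoint unions X ⊕ Z and Y ⊕ Z, and let P ⊆ X. Define R ⊆ Y as the image of P under the disjoint-union trace Tr(f), i.e. R = {y | ∃ x ∈ P, Tr(f) relates x to y}. Then there exists a set Q ⊆ Z (a loop invariant) such that: (i) for every x ∈ P and every w, if f relates inl x to w then either w = inl y for some y ∈ R or w = inr z for some z ∈ Q; and (ii) for every z ∈ Q and every w, if f relates inr z to w then either w = inl y for some y ∈ R or w = inr z' for some z' ∈ Q. -/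
/-- The disjoint-union trace of a relation `f` between `X ⊕ Z` and `Y ⊕ Z`:
it relates `x : X` to `y : Y` iff either `f` relates `inl x` to `inl y`, or there is a
finite chain `z₀, …, zₙ` in `Z` with `f (inl x) (inr z₀)`, `f (inr zᵢ) (inr zᵢ₊₁)` for
each `i < n`, and `f (inr zₙ) (inl y)`. -/
def DTrace {X Y Z : Type*} (f : X ⊕ Z → Y ⊕ Z → Prop) (x : X) (y : Y) : Prop :=
  f (Sum.inl x) (Sum.inl y) ∨
    ∃ z₀ zₙ : Z, f (Sum.inl x) (Sum.inr z₀) ∧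
      Relation.ReflTransGen (fun a b => f (Sum.inr a) (Sum.inr b)) z₀ zₙ ∧
      f (Sum.inr zₙ) (Sum.inl y)

theorem dtrace_complete {X Y Z : Type*} (f : X ⊕ Z → Y ⊕ Z → Prop) (P : Set X)
    (R : Set Y) (hR : R = {y | ∃ x ∈ P, DTrace f x y}) :
    ∃ Q : Set Z,
      (∀ x ∈ P, ∀ w, f (Sum.inl x) w →
        (∃ y ∈ R, w = Sum.inl y) ∨ (∃ z ∈ Q, w = Sum.inr z)) ∧
      (∀ z ∈ Q, ∀ w, f (Sum.inr z) w →
        (∃ y ∈ R, w = Sum.inl y) ∨ (∃ z' ∈ Q, w = Sum.inr z')) := by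
  subst hR
  -- The invariant is the set of states of `Z` reachable from `P`, i.e. the strongest one.
  refine ⟨{z | ∃ x ∈ P, ∃ z₀, f (Sum.inl x) (Sum.inr z₀) ∧
    Relation.ReflTransGen (fun a b => f (Sum.inr a) (Sum.inr b)) z₀ z}, ?_, ?_⟩
  · rintro x hx (y | z) hw
    · exact Or.inl ⟨y, ⟨x, hx, Or.inl hw⟩, rfl⟩
    · exact Or.inr ⟨z, ⟨x, hx, z, hw, .refl⟩, rfl⟩
  · rintro z ⟨x, hx, z₀, h₀, hz⟩ (y | z') hw
    · exact Or.inl ⟨y, ⟨x, hx, Or.inr ⟨z₀, z, h₀, hz, hw⟩⟩, rfl⟩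
    · exact Or.inr ⟨z', ⟨x, hx, z₀, h₀, hz.tail hw⟩, rfl⟩
end

section
/- Let X, Y, Z be sets, let f be a relation between the disjoint unions X ⊕ Z and Y ⊕ Z, and let P ⊆ X, R ⊆ Y. Then the image of P under the disjoint-union trace Tr(f) is contained in R if and only if there exists a set Q ⊆ Z such that: (i) for every x ∈ P and every w, if f relates inl x to w then either w = inl y for some y ∈ R or w = inr z for some z ∈ Q; and (ii) for every z ∈ Q and every w, if f relates inr z to w then either w = inl y for some y ∈ R or w = inr z' for some z' ∈ Q. -/
theorem dtrace_sound_complete {X Y Z : Type*} (f : X ⊕ Z → Y ⊕ Z → Prop)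
    (P : Set X) (R : Set Y) :
    {y | ∃ x ∈ P, DTrace f x y} ⊆ R ↔
      ∃ Q : Set Z,
        (∀ x ∈ P, ∀ w, f (Sum.inl x) w →
          (∃ y ∈ R, w = Sum.inl y) ∨ (∃ z ∈ Q, w = Sum.inr z)) ∧
        (∀ z ∈ Q, ∀ w, f (Sum.inr z) w →
          (∃ y ∈ R, w = Sum.inl y) ∨ (∃ z' ∈ Q, w = Sum.inr z')) := by
  constructor
  · intro h
    refine ⟨{z | ∃ x ∈ P, ∃ z₀, f (Sum.inl x) (Sum.inr z₀) ∧
      Relation.ReflTransGen (fun a b => f (Sum.inr a) (Sum.inr b)) z₀ z}, ?_, ?_⟩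
    · rintro x hx (y | z) hw
      · exact Or.inl ⟨y, h ⟨x, hx, Or.inl hw⟩, rfl⟩
      · exact Or.inr ⟨z, ⟨x, hx, z, hw, .refl⟩, rfl⟩
    · rintro z ⟨x, hx, z₀, h₀, hz⟩ (y | z') hw
      · exact Or.inl ⟨y, h ⟨x, hx, Or.inr ⟨z₀, z, h₀, hz, hw⟩⟩, rfl⟩
      · exact Or.inr ⟨z', ⟨x, hx, z₀, h₀, hz.tail hw⟩, rfl⟩
  · rintro ⟨Q, hP, hQ⟩ y ⟨x, hx, hxy | ⟨z₀, z, h₀, hz, hy⟩⟩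
    · simpa using hP x hx _ hxy
    · have hzQ : z ∈ Q := by
        clear hy
        induction hz with
        | refl => simpa using hP x hx _ h₀
        | tail _ hbc ih => simpa using hQ _ ih _ hbc
      simpa using hQ z hzQ _ hy
end

section
/- Let X, Y, Z be sets and let f be a relation between the disjoint unions X ⊕ Z and Y ⊕ Z that is single-valued (i.e. a partial function: for every input u, if f relates u to w and u to w' then w = w'). Then the disjoint-union trace Tr(f) is a single-valued relation between X and Y. -/
/-- A chain inside `Z` starting at a point that `f` sends into `Y` is trivial, since by
single-valuedness no step from that point stays in `Z`. -/
theorem eq_of_chain_of_exit {X Y Z : Type*} {f : X ⊕ Z → Y ⊕ Z → Prop}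
    (hf : ∀ u w w', f u w → f u w' → w = w') {a b : Z} {y : Y}
    (hab : Relation.ReflTransGen (fun a b => f (Sum.inr a) (Sum.inr b)) a b)
    (ha : f (Sum.inr a) (Sum.inl y)) : a = b := by
  rcases hab.cases_head with h | ⟨c, hac, -⟩
  · exact h
  · cases hf _ _ _ ha hac

theorem dtrace_singleValued {X Y Z : Type*} (f : X ⊕ Z → Y ⊕ Z → Prop)
    (hf : ∀ u w w', f u w → f u w' → w = w') :
    ∀ (x : X) (y y' : Y), DTrace f x y → DTrace f x y' → y = y' := by
  rintro x y y' (h | ⟨z₀, z, h₀, hz, h⟩) (h' | ⟨z₀', z', h₀', hz', h'⟩)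
  · exact Sum.inl_injective (hf _ _ _ h h')
  · cases hf _ _ _ h h₀'
  · cases hf _ _ _ h₀ h'
  · obtain rfl := Sum.inr_injective (hf _ _ _ h₀ h₀')
    -- Two chains of a deterministic relation with the same start are nested, so one
    -- endpoint reaches the other; both endpoints exit to `Y`, so they coincide.
    have hzz : z = z' := by
      rcases Relation.ReflTransGen.total_of_right_unique
        (fun a _ _ hb hc => Sum.inr_injective (hf (Sum.inr a) _ _ hb hc)) hz hz' with hc | hc
      · exact eq_of_chain_of_exit hf hc h
      · exact (eq_of_chain_of_exit hf hc h').symm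
    subst hzz
    exact Sum.inl_injective (hf _ _ _ h h')
end

section
/- Let U, V, X, Y, Z be real Hilbert spaces (complete real inner product spaces), and let u : U → X × Y and v : V → Y × Z be continuous linear maps. Then there is a closed submodule E of U × V, namely E = {(a, b) ∈ U × V | the second component of u(a) equals the first component of v(b)}, such that the image of E under the continuous linear map (a, b) ↦ (first component of u(a), second component of v(b)) equals the relational composite of the ranges of u and v, i.e. the set {(x, z) ∈ X × Z | ∃ y ∈ Y, (x, y) ∈ range(u) ∧ (y, z) ∈ range(v)}. In particular, the composite of two relations that are ranges of continuous linear maps from Hilbert spaces is again the range of a continuous linear map from a Hilbert space. -/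
/-! A pair `(a, b)` lies in the equalizer exactly when `u a = (x, y)` and `v b = (y, z)` share their
`Y`-coordinate `y`, so its image `(x, z)` runs exactly through the relational composite. -/

/-- Composition of Hilbert-space relations: given continuous linear maps
`u : U → X × Y` and `v : V → Y × Z` from Hilbert spaces, the equalizer
`E = {(a, b) | (u a).2 = (v b).1}` is a closed submodule of `U × V`, and the image of
`E` under the continuous linear map `(a, b) ↦ ((u a).1, (v b).2)` is exactly the
relational composite of `range u` and `range v`. -/
theorem hilbert_rel_comp
    {U V X Y Z : Type*}
    [NormedAddCommGroup U] [InnerProductSpace ℝ U] [CompleteSpace U]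
    [NormedAddCommGroup V] [InnerProductSpace ℝ V] [CompleteSpace V]
    [NormedAddCommGroup X] [InnerProductSpace ℝ X] [CompleteSpace X]
    [NormedAddCommGroup Y] [InnerProductSpace ℝ Y] [CompleteSpace Y]
    [NormedAddCommGroup Z] [InnerProductSpace ℝ Z] [CompleteSpace Z]
    (u : U →L[ℝ] X × Y) (v : V →L[ℝ] Y × Z) :
    ∃ E : Submodule ℝ (U × V),
      IsClosed (E : Set (U × V)) ∧
      (E : Set (U × V)) = {p : U × V | (u p.1).2 = (v p.2).1} ∧
      ∃ e : U × V →L[ℝ] X × Z,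
        (∀ p : U × V, e p = ((u p.1).1, (v p.2).2)) ∧
        e '' (E : Set (U × V)) =
          {q : X × Z | ∃ y : Y, (q.1, y) ∈ Set.range u ∧ (y, q.2) ∈ Set.range v} := by
  -- `E` is closed because it is the locus where two continuous linear maps into `Y` agree.
  let f : U × V →L[ℝ] Y :=
    (ContinuousLinearMap.snd ℝ X Y).comp (u.comp (ContinuousLinearMap.fst ℝ U V))
  let g : U × V →L[ℝ] Y :=
    (ContinuousLinearMap.fst ℝ Y Z).comp (v.comp (ContinuousLinearMap.snd ℝ U V))
  refine ⟨LinearMap.eqLocus (f : U × V →ₗ[ℝ] Y) (g : U × V →ₗ[ℝ] Y),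
    isClosed_eq f.continuous g.continuous, rfl,
    ((ContinuousLinearMap.fst ℝ X Y).comp (u.comp (ContinuousLinearMap.fst ℝ U V))).prod
      ((ContinuousLinearMap.snd ℝ Y Z).comp (v.comp (ContinuousLinearMap.snd ℝ U V))),
    fun _ => rfl, ?_⟩
  ext ⟨x, z⟩
  constructor
  · rintro ⟨⟨a, b⟩, hab, hxz⟩
    have hab' : (u a).2 = (v b).1 := hab
    obtain ⟨rfl, rfl⟩ := Prod.mk.inj hxz
    exact ⟨(u a).2, ⟨a, rfl⟩, ⟨b, Prod.ext hab'.symm rfl⟩⟩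
  · rintro ⟨y, ⟨a, ha⟩, ⟨b, hb⟩⟩
    have hx : (u a).1 = x := congrArg Prod.fst ha
    have hz : (v b).2 = z := congrArg Prod.snd hb
    exact ⟨(a, b), (congrArg Prod.snd ha).trans (congrArg Prod.fst hb).symm, Prod.ext hx hz⟩
end

section
/- Let U, X, Y, Z be real Hilbert spaces (complete real inner product spaces) and let u : U → (X × Z) × (Y × Z) be a continuous linear map. Then there is a closed submodule E of U, namely E = {a ∈ U | the Z-component of the first factor of u(a) equals the Z-component of the second factor of u(a)}, such that the image of E under the continuous linear map a ↦ (X-component of u(a), Y-component of u(a)) equals the cartesian trace of range(u), i.e. the set {(x, y) ∈ X × Y | ∃ z ∈ Z, ((x, z), (y, z)) ∈ range(u)}. In particular, the cartesian trace of a relation that is the range of a continuous linear map from a Hilbert space is again the range of a continuous linear map from a Hilbert space. -/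
/-!
The equalizer `E` is the kernel of the continuous linear map sending `a` to the difference of the
two `Z`-components of `u a`, hence a closed submodule. A point `(x, y)` lies in the cartesian trace
of `range u` exactly when some `a` has `u a = ((x, z), (y, z))`; such an `a` lies in `E`, and
conversely each `a ∈ E` supplies the witness `z` as the common `Z`-component of `u a`.
-/

/-- Cartesian trace of a Hilbert-space relation: given a continuous linear map
`u : U → (X × Z) × (Y × Z)` from a Hilbert space, the equalizer
`E = {a | (u a).1.2 = (u a).2.2}` is a closed submodule of `U`, and the image of `E`
under the continuous linear map `a ↦ ((u a).1.1, (u a).2.1)` is exactly the cartesian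
trace of `range u`. -/
theorem hilbert_rel_trace
    {U X Y Z : Type*}
    [NormedAddCommGroup U] [InnerProductSpace ℝ U] [CompleteSpace U]
    [NormedAddCommGroup X] [InnerProductSpace ℝ X] [CompleteSpace X]
    [NormedAddCommGroup Y] [InnerProductSpace ℝ Y] [CompleteSpace Y]
    [NormedAddCommGroup Z] [InnerProductSpace ℝ Z] [CompleteSpace Z]
    (u : U →L[ℝ] (X × Z) × (Y × Z)) :
    ∃ E : Submodule ℝ U,
      IsClosed (E : Set U) ∧
      (E : Set U) = {a : U | (u a).1.2 = (u a).2.2} ∧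
      ∃ e : U →L[ℝ] X × Y,
        (∀ a : U, e a = ((u a).1.1, (u a).2.1)) ∧
        e '' (E : Set U) =
          {q : X × Y | ∃ z : Z, ((q.1, z), (q.2, z)) ∈ Set.range u} := by
  -- `d` compares the two `Z`-components, so that `E` is its kernel.
  let d : U →L[ℝ] Z :=
    (ContinuousLinearMap.snd ℝ X Z ∘L ContinuousLinearMap.fst ℝ (X × Z) (Y × Z)) ∘L u -
      (ContinuousLinearMap.snd ℝ Y Z ∘L ContinuousLinearMap.snd ℝ (X × Z) (Y × Z)) ∘L u
  let e : U →L[ℝ] X × Y :=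
    ((ContinuousLinearMap.fst ℝ X Z).prodMap (ContinuousLinearMap.fst ℝ Y Z)) ∘L u
  have hE : (LinearMap.ker d.toLinearMap : Set U) = {a : U | (u a).1.2 = (u a).2.2} := by
    ext a
    exact sub_eq_zero
  refine ⟨LinearMap.ker d.toLinearMap, d.isClosed_ker, hE, e, fun _ => rfl, ?_⟩
  rw [hE]
  ext ⟨x, y⟩
  constructor
  · rintro ⟨a, ha, hxy⟩
    obtain ⟨hx, hy⟩ := Prod.mk.inj hxy
    exact ⟨(u a).1.2, a, Prod.ext (Prod.ext hx rfl) (Prod.ext hy (Eq.symm ha))⟩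
  · rintro ⟨z, a, ha⟩
    refine ⟨a, ?_, ?_⟩
    · simp [ha]
    · change ((u a).1.1, (u a).2.1) = (x, y)
      rw [ha]
end
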